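/- Let Ω ⊆ ℂ be open, connected and simply connected, z₀ ∈ Ω, A: Ω → Mat(N×N, ℂ) and b: Ω → ℂ^N holomorphic (i.e. differentiable/analytic), and ψ₀ ∈ ℂ^N. Then there exists a unique holomorphic ψ: Ω → ℂ^N with ψ'(z) = A(z)ψ(z) + b(z) for all z ∈ Ω and ψ(z₀) = ψ₀. -/

import Mathlib

/-!
The argument is analytic continuation along a covering space.

On a small disc (`exists_ball_solution`) the equation is solved with any prescribed value at any
point of the disc, by summing the Picard series `∑ uₙ` with `u₀' = b`, `uₙ₊₁' = A uₙ`; each term is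
a primitive of a holomorphic function on the disc, and the terms decay geometrically.
Solutions agreeing at one point of a connected open set agree on it
(`eqOn_of_isPreconnected`), by a contraction estimate near the point and the identity theorem.

Let `V` be the space of values, equipped with the *discrete* topology. Recording a solution on a
small disc by its value at the centre of the disc makes `Ω × V` into a fibre bundle over `Ω` with
fibre `V`, whose coordinate changes are locally constant by uniqueness (`solutionBundle`). A
continuous section is the same thing as a global solution. Since the fibre is discrete, the
projection is a covering map, and since `Ω` is simply connected, the identity of `Ω` lifts to a
section through any prescribed point.
-/

open Metric Set Filter Topology

section LinearODE

variable {V : Type*} [NormedAddCommGroup V] [NormedSpace ℂ V]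

/-- `IsSolutionOn A b U ψ` says that `ψ' = A ψ + b` on `U`, with two-sided complex derivatives. -/
def IsSolutionOn (A : ℂ → V →L[ℂ] V) (b : ℂ → V) (U : Set ℂ) (ψ : ℂ → V) : Prop :=
  ∀ z ∈ U, HasDerivAt ψ (A z (ψ z) + b z) z

variable {A : ℂ → V →L[ℂ] V} {b : ℂ → V} {U : Set ℂ}

lemma IsSolutionOn.mono {U' : Set ℂ} {ψ : ℂ → V} (h : IsSolutionOn A b U ψ) (hU : U' ⊆ U) :
    IsSolutionOn A b U' ψ := fun z hz => h z (hU hz)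

/-- One step of the contraction estimate: on a disc where `‖A‖ ≤ M` with `4 M r ≤ 1`, a primitive
of `A f` vanishing somewhere in the disc is at most half as large as `f`. -/
lemma norm_le_half_of_hasDerivAt {c w : ℂ} {r M C : ℝ} {f g : ℂ → V}
    (hw : w ∈ ball c r) (hM : ∀ z ∈ ball c r, ‖A z‖ ≤ M) (hr : 4 * M * r ≤ 1)
    (hf : ∀ z ∈ ball c r, ‖f z‖ ≤ C)
    (hg : ∀ z ∈ ball c r, HasDerivAt g (A z (f z)) z) (hgw : g w = 0) :
    ∀ z ∈ ball c r, ‖g z‖ ≤ C / 2 := by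
  intro z hz
  have hM0 : 0 ≤ M := (norm_nonneg _).trans (hM w hw)
  have hC0 : 0 ≤ C := (norm_nonneg _).trans (hf w hw)
  have h := (convex_ball c r).norm_image_sub_le_of_norm_hasDerivWithin_le (C := M * C)
    (fun x hx => (hg x hx).hasDerivWithinAt)
    (fun x hx => ((A x).le_opNorm _).trans
      (mul_le_mul (hM x hx) (hf x hx) (norm_nonneg _) hM0)) hw hz
  rw [hgw, sub_zero] at h
  have hd : ‖z - w‖ ≤ 2 * r := by
    rw [← dist_eq_norm]
    have := dist_triangle_right z w c
    rw [mem_ball] at hw hz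
    linarith
  have h1 : M * C * ‖z - w‖ ≤ M * C * (2 * r) := by gcongr
  nlinarith

/-- A holomorphic coefficient is bounded on small discs, so the contraction estimate applies on
them. -/
lemma exists_ball_bound (hU : IsOpen U) {c : ℂ} (hc : c ∈ U) (hA : ContinuousOn A U)
    {f : ℂ → V} (hf : ContinuousOn f U) :
    ∃ r > 0, ∃ M K : ℝ, ball c r ⊆ U ∧ (∀ z ∈ ball c r, ‖A z‖ ≤ M) ∧
      (∀ z ∈ ball c r, ‖f z‖ ≤ K) ∧ 4 * M * r ≤ 1 := by
  have hUc : U ∈ 𝓝 c := hU.mem_nhds hc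
  have h1 : ∀ᶠ z in 𝓝 c, ‖A z‖ < ‖A c‖ + 1 :=
    (hA.continuousAt hUc).norm.eventually (gt_mem_nhds (lt_add_one _))
  have h2 : ∀ᶠ z in 𝓝 c, ‖f z‖ < ‖f c‖ + 1 :=
    (hf.continuousAt hUc).norm.eventually (gt_mem_nhds (lt_add_one _))
  obtain ⟨ε, hε, h⟩ := Metric.eventually_nhds_iff_ball.1 ((h1.and h2).and hUc)
  have hM : 0 < 4 * (‖A c‖ + 1) := by positivity
  refine ⟨min ε (1 / (4 * (‖A c‖ + 1))), by positivity, ‖A c‖ + 1, ‖f c‖ + 1, ?_, ?_, ?_, ?_⟩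
  · exact fun z hz => (h z (ball_subset_ball (min_le_left _ _) hz)).2
  · exact fun z hz => (h z (ball_subset_ball (min_le_left _ _) hz)).1.1.le
  · exact fun z hz => (h z (ball_subset_ball (min_le_left _ _) hz)).1.2.le
  · calc 4 * (‖A c‖ + 1) * min ε (1 / (4 * (‖A c‖ + 1)))
        ≤ 4 * (‖A c‖ + 1) * (1 / (4 * (‖A c‖ + 1))) := by
          gcongr
          exact min_le_right _ _
      _ = 1 := by field_simp

lemma le_zero_of_forall_le_half_pow {x K : ℝ} (h : ∀ n : ℕ, x ≤ K * (1 / 2) ^ n) : x ≤ 0 := by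
  have : Tendsto (fun n : ℕ => K * (1 / 2 : ℝ) ^ n) atTop (𝓝 (K * 0)) :=
    (tendsto_pow_atTop_nhds_zero_of_lt_one (by norm_num) (by norm_num)).const_mul K
  rw [mul_zero] at this
  exact ge_of_tendsto' this h

variable [CompleteSpace V]

/-- The identity principle for solutions of the linear equation. -/
theorem eqOn_of_isPreconnected (hU : IsOpen U) (hUc : IsPreconnected U)
    (hA : ContinuousOn A U) {φ ψ : ℂ → V} (hφ : IsSolutionOn A b U φ)
    (hψ : IsSolutionOn A b U ψ) {w : ℂ} (hw : w ∈ U) (h : φ w = ψ w) : EqOn φ ψ U := by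
  set g : ℂ → V := fun z => φ z - ψ z with hg_def
  have hg : ∀ z ∈ U, HasDerivAt g (A z (g z)) z := fun z hz => by
    have := (hφ z hz).sub (hψ z hz)
    rw [add_sub_add_right_eq_sub, ← map_sub] at this
    exact this
  have hgd : DifferentiableOn ℂ g U :=
    fun z hz => (hg z hz).differentiableAt.differentiableWithinAt
  obtain ⟨r, hr, M, K, hrU, hM, hK, hMr⟩ := exists_ball_bound hU hw hA hgd.continuousOn
  have key : ∀ n : ℕ, ∀ z ∈ ball w r, ‖g z‖ ≤ K * (1 / 2) ^ n := by
    intro n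
    induction n with
    | zero => simpa using hK
    | succ n ih =>
      intro z hz
      have := norm_le_half_of_hasDerivAt (mem_ball_self hr) hM hMr ih
        (fun z hz => hg z (hrU hz)) (by simp [hg_def, h]) z hz
      rwa [pow_succ, mul_one_div, ← mul_div_assoc]
  have hev : g =ᶠ[𝓝 w] 0 := by
    filter_upwards [ball_mem_nhds w hr] with z hz
    exact norm_le_zero_iff.1 (le_zero_of_forall_le_half_pow fun n => key n z hz)
  have := (hgd.analyticOnNhd hU).eqOn_zero_of_preconnected_of_eventuallyEq_zero hUc hw hev
  exact fun z hz => sub_eq_zero.1 (this hz)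

/-- Around each point there is a disc on which the equation is solvable with any value prescribed
at *any* point of the disc, not only at its centre. -/
theorem exists_ball_solution (hU : IsOpen U) (hA : DifferentiableOn ℂ A U)
    (hb : DifferentiableOn ℂ b U) {c : ℂ} (hc : c ∈ U) :
    ∃ r > 0, ball c r ⊆ U ∧ ∀ w ∈ ball c r, ∀ v : V,
      ∃ ψ : ℂ → V, ψ w = v ∧ IsSolutionOn A b (ball c r) ψ := by
  obtain ⟨r, hr, M, K, hrU, hM, hK, hMr⟩ :=
    exists_ball_bound hU hc hA.continuousOn hb.continuousOn
  refine ⟨r, hr, hrU, fun w hw v => ?_⟩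
  have hAr := hA.mono hrU
  obtain ⟨u₀, hu₀w, hu₀⟩ := ((hb.mono hrU).isExactOn_ball).with_val_at w v
  -- The successor step is only applied to holomorphic functions; the hypothesis inside the
  -- existential makes it a total operation.
  have step : ∀ f : ℂ → V, ∃ g : ℂ → V, DifferentiableOn ℂ f (ball c r) →
      g w = 0 ∧ ∀ z ∈ ball c r, HasDerivAt g (A z (f z)) z := by
    intro f
    by_cases hf : DifferentiableOn ℂ f (ball c r)
    · obtain ⟨g, hg⟩ := ((hAr.clm_apply hf).isExactOn_ball).with_val_at w 0
      exact ⟨g, fun _ => hg⟩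
    · exact ⟨0, fun h => absurd h hf⟩
  choose S hS using step
  let u : ℕ → ℂ → V := fun n => S^[n] u₀
  have hu_succ : ∀ n, u (n + 1) = S (u n) := fun n => Function.iterate_succ_apply' S n u₀
  have hud : ∀ n, DifferentiableOn ℂ (u n) (ball c r) := by
    intro n
    induction n with
    | zero => exact fun z hz => (hu₀ z hz).differentiableAt.differentiableWithinAt
    | succ n ih =>
      rw [hu_succ]
      exact fun z hz => ((hS _ ih).2 z hz).differentiableAt.differentiableWithinAt
  have hu' : ∀ n, ∀ z ∈ ball c r, HasDerivAt (u (n + 1)) (A z (u n z)) z := by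
    intro n
    rw [hu_succ]
    exact (hS _ (hud n)).2
  have huw : ∀ n, u (n + 1) w = 0 := by
    intro n
    rw [hu_succ]
    exact (hS _ (hud n)).1
  have hM0 : 0 ≤ M := (norm_nonneg _).trans (hM w hw)
  obtain ⟨C, hC⟩ : ∃ C, ∀ z ∈ ball c r, ‖u 0 z‖ ≤ C := by
    have hK0 : 0 ≤ K := (norm_nonneg _).trans (hK w hw)
    refine ⟨‖v‖ + K * (2 * r), fun z hz => ?_⟩
    have h := (convex_ball c r).norm_image_sub_le_of_norm_hasDerivWithin_le
      (fun x hx => (hu₀ x hx).hasDerivWithinAt) hK hw hz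
    have hd : ‖z - w‖ ≤ 2 * r := by
      rw [← dist_eq_norm]
      have := dist_triangle_right z w c
      rw [mem_ball] at hw hz
      linarith
    have h1 : K * ‖z - w‖ ≤ K * (2 * r) := by gcongr
    have h2 := norm_le_norm_add_norm_sub' (u₀ z) v
    rw [hu₀w] at h
    change ‖u₀ z‖ ≤ _
    linarith
  have hun : ∀ n : ℕ, ∀ z ∈ ball c r, ‖u n z‖ ≤ C * (1 / 2) ^ n := by
    intro n
    induction n with
    | zero => simpa using hC
    | succ n ih =>
      intro z hz
      have := norm_le_half_of_hasDerivAt hw hM hMr ih (hu' n) (huw n) z hz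
      rwa [pow_succ, mul_one_div, ← mul_div_assoc]
  have hgeom : Summable fun n : ℕ => C * (1 / 2 : ℝ) ^ n :=
    (summable_geometric_of_lt_one (by norm_num) (by norm_num)).mul_left C
  have hsum : ∀ z ∈ ball c r, Summable fun n => u n z := fun z hz =>
    .of_norm_bounded hgeom fun n => hun n z hz
  -- The initial term is kept apart, since its derivative is `b` instead of `A` times a term.
  refine ⟨fun z => u 0 z + ∑' n, u (n + 1) z, ?_, fun z hz => ?_⟩
  · simp only [huw, tsum_zero, add_zero]
    exact hu₀w
  · have h1 : HasDerivAt (fun z => ∑' n, u (n + 1) z) (∑' n, A z (u n z)) z :=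
      hasDerivAt_tsum_of_isPreconnected (hgeom.mul_left M) isOpen_ball
        (convex_ball c r).isPreconnected (fun n y hy => hu' n y hy)
        (fun n y hy => ((A y).le_opNorm _).trans
          (mul_le_mul (hM y hy) (hun n y hy) (norm_nonneg _) hM0))
        hw (by simpa only [huw] using summable_zero) hz
    rw [← (A z).map_tsum (hsum z hz), (hsum z hz).tsum_eq_zero_add] at h1
    have h2 := (hu₀ z hz).add h1
    rw [add_comm (b z)] at h2
    exact h2

/-- The space `V` with the discrete topology: the fibre of the covering space of germs of
solutions. -/
def DiscreteFiber (V : Type*) := V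

instance : TopologicalSpace (DiscreteFiber V) := ⊥

instance : DiscreteTopology (DiscreteFiber V) := ⟨rfl⟩

/-- The covering space of germs of solutions over `U`. The chart with index `c` covers the disc
`ball c (r c)`, and `P c w v` is a solution on that disc with value `v` at `w`. A germ at `z` has
as coordinate in the chart `c` the value at `c` of the solution it extends to on the disc. -/
noncomputable def solutionBundle (hA : ContinuousOn A U) (r : U → ℝ)
    (hr : ∀ c, 0 < r c) (hrU : ∀ c : U, ball (c : ℂ) (r c) ⊆ U) (P : U → ℂ → V → ℂ → V)
    (hPw : ∀ c : U, ∀ w ∈ ball (c : ℂ) (r c), ∀ v, P c w v w = v)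
    (hP : ∀ c : U, ∀ w ∈ ball (c : ℂ) (r c), ∀ v,
      IsSolutionOn A b (ball (c : ℂ) (r c)) (P c w v)) :
    FiberBundleCore U U (DiscreteFiber V) :=
  have hP' : ∀ c : U, ∀ w ∈ ball (c : ℂ) (r c), ∀ x ∈ ball (c : ℂ) (r c), ∀ φ : ℂ → V,
      IsSolutionOn A b (ball (c : ℂ) (r c)) φ → P c w (φ w) x = φ x := fun c w hw x hx φ hφ =>
    eqOn_of_isPreconnected isOpen_ball (convex_ball _ _).isPreconnected (hA.mono (hrU c))
      (hP c w hw _) hφ hw (hPw c w hw _) hx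
  { baseSet := fun c => {z | (z : ℂ) ∈ ball (c : ℂ) (r c)}
    isOpen_baseSet := fun c => isOpen_ball.preimage continuous_subtype_val
    indexAt := id
    mem_baseSet_at := fun c => mem_ball_self (hr c)
    coordChange := fun i j z v => P j z (P i i v z) j
    coordChange_self := fun i z hz v => by
      rw [hP' i z hz i (mem_ball_self (hr i)) _ (hP i i (mem_ball_self (hr i)) v)]
      exact hPw i i (mem_ball_self (hr i)) v
    continuousOn_coordChange := fun i j => by
      rintro ⟨z, v⟩ ⟨⟨hzi, hzj⟩, -⟩
      have hzi : (z : ℂ) ∈ ball (i : ℂ) (r i) := hzi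
      have hzj : (z : ℂ) ∈ ball (j : ℂ) (r j) := hzj
      have hii := mem_ball_self (x := (i : ℂ)) (hr i)
      have hjj := mem_ball_self (x := (j : ℂ)) (hr j)
      apply ContinuousAt.continuousWithinAt
      -- The coordinate change is locally constant: the solutions on the two discs
      -- agree on their intersection, which is convex.
      have hc : ∀ᶠ p : U × DiscreteFiber V in 𝓝 (z, v),
          P j p.1 (P i i p.2 p.1) j = P j z (P i i v z) j := by
        have h1 : ∀ᶠ p : U × DiscreteFiber V in 𝓝 (z, v), p.2 = v :=
          ((isOpen_discrete ({v} : Set (DiscreteFiber V))).preimage continuous_snd).mem_nhds rfl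
        have h2 : ∀ᶠ p : U × DiscreteFiber V in 𝓝 (z, v),
            (p.1 : ℂ) ∈ ball (i : ℂ) (r i) ∩ ball (j : ℂ) (r j) :=
          (continuous_subtype_val.comp continuous_fst).continuousAt.eventually
            ((isOpen_ball.inter isOpen_ball).mem_nhds ⟨hzi, hzj⟩)
        filter_upwards [h1, h2] with p hp1 hp2
        rw [hp1]
        have heq : EqOn (P i i v) (P j z (P i i v z))
            (ball (i : ℂ) (r i) ∩ ball (j : ℂ) (r j)) :=
          eqOn_of_isPreconnected (isOpen_ball.inter isOpen_ball)
            ((convex_ball _ _).inter (convex_ball _ _)).isPreconnected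
            (hA.mono (inter_subset_left.trans (hrU i)))
            ((hP i i hii v).mono inter_subset_left) ((hP j z hzj _).mono inter_subset_right)
            ⟨hzi, hzj⟩ (hPw j z hzj _).symm
        rw [heq hp2]
        exact hP' j p.1 hp2.2 j hjj _ (hP j z hzj _)
      have hk : ContinuousAt
          (fun _ : U × DiscreteFiber V => (show DiscreteFiber V from P j z (P i i v z) j)) (z, v) :=
        continuousAt_const
      exact hk.congr (hc.mono fun p hp => hp.symm)
    coordChange_comp := fun i j k z hz v => by
      have hjj := mem_ball_self (x := (j : ℂ)) (hr j)
      -- Going through the centre of the disc `j` and back to `z` returns the same value.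
      congr 1
      exact (hP' j j hjj z hz.1.2 _ (hP j z hz.1.2 _)).trans (hPw j z hz.1.2 _) }

/-- Global existence: a section of the covering space of germs, obtained by lifting the identity
of the simply connected set `U`, is read off as a solution on all of `U`. -/
theorem exists_global_solution (hU : IsOpen U) (hsc : SimplyConnectedSpace U)
    (hA : DifferentiableOn ℂ A U) (hb : DifferentiableOn ℂ b U) {z₀ : ℂ} (hz₀ : z₀ ∈ U) (v₀ : V) :
    ∃ ψ : ℂ → V, ψ z₀ = v₀ ∧ IsSolutionOn A b U ψ := by
  classical
  have hloc : ∀ c : U, ∃ r > 0, ball (c : ℂ) r ⊆ U ∧ ∀ w, ∀ v : V, ∃ ψ : ℂ → V,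
      w ∈ ball (c : ℂ) r → ψ w = v ∧ IsSolutionOn A b (ball (c : ℂ) r) ψ := by
    intro c
    obtain ⟨r, hr, hrU, h⟩ := exists_ball_solution hU hA hb c.2
    refine ⟨r, hr, hrU, fun w v => ?_⟩
    by_cases hw : w ∈ ball (c : ℂ) r
    · obtain ⟨ψ, hψ⟩ := h w hw v
      exact ⟨ψ, fun _ => hψ⟩
    · exact ⟨0, fun h => absurd h hw⟩
  choose r hr hrU P hP using hloc
  let Z := solutionBundle (b := b) hA.continuousOn r hr hrU P
    (fun c w hw v => (hP c w v hw).1) (fun c w hw v => (hP c w v hw).2)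
  have hcov : IsCoveringMap (Bundle.TotalSpace.proj : Z.TotalSpace → U) :=
    FiberBundle.isCoveringMap (F := DiscreteFiber V)
  have := hU.locallyPathConnectedSpace
  obtain ⟨F, ⟨hF0, hF⟩, -⟩ := hcov.existsUnique_continuousMap_lifts (ContinuousMap.id U)
    ⟨z₀, hz₀⟩ (⟨⟨z₀, hz₀⟩, v₀⟩ : Z.TotalSpace) rfl
  have hFp : ∀ z : U, (F z).1 = z := fun z => congr_fun hF z
  -- The centre of the chart at `z` is `z`, so the fibre component is the value of the solution.
  let G : U → V := fun z => (F z).2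
  have hG0 : G ⟨z₀, hz₀⟩ = v₀ := congrArg (fun e : Z.TotalSpace => (e.2 : V)) hF0
  -- The centre of the chart at `z` is `z`, so the fibre component is the value of the solution.
  let ψ : ℂ → V := fun z => if hz : z ∈ U then G ⟨z, hz⟩ else 0
  have hψG : ∀ z : U, ψ z = G z := fun z => dif_pos z.2
  refine ⟨ψ, (hψG ⟨z₀, hz₀⟩).trans hG0, fun c hc => ?_⟩
  set c' : U := ⟨c, hc⟩
  have hcc : c ∈ ball (c' : ℂ) (r c') := mem_ball_self (hr c')
  -- In the chart centred at `c` the section has locally constant fibre coordinate.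
  have hconst : ∀ᶠ z : U in 𝓝 c', P c' z (ψ z) c = ψ c := by
    let t := Z.localTriv c'
    have hsource : F c' ∈ t.source := by
      rw [Z.mem_localTriv_source]
      change ((F c').1 : ℂ) ∈ ball (c' : ℂ) (r c')
      rw [hFp]
      exact hcc
    have hcont : ContinuousAt (fun z => (t (F z)).2) c' :=
      continuous_snd.continuousAt.comp
        (ContinuousAt.comp (f := F) (t.continuousAt hsource) F.continuous.continuousAt)
    have hev : ∀ᶠ z in 𝓝 c', (t (F z)).2 = (t (F c')).2 :=
      hcont.preimage_mem_nhds ((isOpen_discrete {(t (F c')).2}).mem_nhds rfl)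
    have hval : ∀ z : U, ((t (F z)).2 : V) = P c' z (ψ z) c := by
      intro z
      have h : ((t (F z)).2 : V) =
          P c' (F z).1 (P (F z).1 (F z).1 (G z) (F z).1) c := rfl
      rw [h, hFp, hψG, (hP z z (G z) (mem_ball_self (hr z))).1]
    filter_upwards [hev] with z hz
    have h : ((t (F z)).2 : V) = (t (F c')).2 := hz
    rw [hval, hval] at h
    exact h.trans (hP c' c (ψ c) hcc).1
  have hsol := (hP c' c (ψ c) hcc).2
  have hev : ∀ᶠ z in 𝓝 c, ψ z = P c' c (ψ c) z := by
    have h1 : ∀ᶠ z in 𝓝 c, ∀ hz : z ∈ U, P c' z (ψ z) c = ψ c := by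
      have : map Subtype.val (𝓝 c') = 𝓝 c := map_nhds_subtype_coe_eq_nhds hc (hU.mem_nhds hc)
      rw [← this, eventually_map]
      exact hconst.mono fun z hz _ => hz
    filter_upwards [h1, isOpen_ball.mem_nhds hcc] with z hz hzb
    have hz' := hz (hrU c' hzb)
    have heq := eqOn_of_isPreconnected isOpen_ball (convex_ball _ _).isPreconnected
      (hA.continuousOn.mono (hrU c')) (hP c' z (ψ z) hzb).2 hsol hcc
      (hz'.trans (hP c' c (ψ c) hcc).1.symm)
    exact (hP c' z (ψ z) hzb).1.symm.trans (heq hzb)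
  have hψ := (hsol c hcc).congr_of_eventuallyEq hev
  rwa [(hP c' c (ψ c) hcc).1] at hψ

end LinearODE


/-- Global existence and uniqueness for linear holomorphic ODEs on a
1-connected domain: if `Ω ⊆ ℂ` is open, connected and simply connected,
`z₀ ∈ Ω`, `A : Ω → Mat(N×N,ℂ)` and `b : Ω → ℂ^N` are holomorphic and
`ψ₀ ∈ ℂ^N`, then there is a unique holomorphic `ψ : Ω → ℂ^N` with
`ψ' = A ψ + b` on `Ω` and `ψ(z₀) = ψ₀`. -/
theorem holomorphic_linear_ODE_exists_unique (N : ℕ) (Ω : Set ℂ)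
    (hΩ : IsOpen Ω) (hconn : IsConnected Ω) (hsc : SimplyConnectedSpace Ω)
    (z₀ : ℂ) (hz₀ : z₀ ∈ Ω)
    (A : ℂ → (Fin N → ℂ) →L[ℂ] (Fin N → ℂ)) (b : ℂ → Fin N → ℂ)
    (hA : DifferentiableOn ℂ A Ω) (hb : DifferentiableOn ℂ b Ω)
    (ψ₀ : Fin N → ℂ) :
    ∃ ψ : ℂ → Fin N → ℂ,
      (DifferentiableOn ℂ ψ Ω ∧ ψ z₀ = ψ₀ ∧
        ∀ z ∈ Ω, HasDerivAt ψ (A z (ψ z) + b z) z) ∧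
      ∀ φ : ℂ → Fin N → ℂ,
        (DifferentiableOn ℂ φ Ω ∧ φ z₀ = ψ₀ ∧
          ∀ z ∈ Ω, HasDerivAt φ (A z (φ z) + b z) z) →
        Set.EqOn φ ψ Ω := by
  obtain ⟨ψ, hψ₀, hψ⟩ := exists_global_solution hΩ hsc hA hb hz₀ ψ₀
  refine ⟨ψ, ⟨fun z hz => (hψ z hz).differentiableAt.differentiableWithinAt, hψ₀, hψ⟩, ?_⟩
  rintro φ ⟨-, hφ₀, hφ⟩
  exact eqOn_of_isPreconnected hΩ hconn.isPreconnected hA.continuousOn hφ hψ hz₀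
    (hφ₀.trans hψ₀.symm)
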